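/- For intuitionistic fuzzy values α and β, JS(α, β) = 0 if and only if α = β. -/

import Mathlib

/-- `L p q = p·log₂(2p/(p+q)) + q·log₂(2q/(p+q))`, with Lean's conventions
`0 * log₂ _ = 0` and `x / 0 = 0`, `log₂ 0 = 0` implementing `0·log 0 = 0`
and `0·log(0/0) = 0`. -/
noncomputable def L (p q : ℝ) : ℝ :=
  p * Real.logb 2 (2 * p / (p + q)) + q * Real.logb 2 (2 * q / (p + q))

/-- An intuitionistic fuzzy value: a pair `⟨μ, ν⟩` with `0 ≤ μ`, `0 ≤ ν`,
`μ + ν ≤ 1` (hence also `μ ≤ 1` and `ν ≤ 1`). -/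
@[ext]
structure IFV where
  mu : ℝ
  nu : ℝ
  mu_nonneg : 0 ≤ mu
  nu_nonneg : 0 ≤ nu
  sum_le : mu + nu ≤ 1

/-- `Z(α,β) = L(1−μ_α, 1−μ_β) + L(ν_α, ν_β)`. -/
noncomputable def Z (a b : IFV) : ℝ := L (1 - a.mu) (1 - b.mu) + L a.nu b.nu

/-- The normalized Jensen–Shannon IF divergence `JS(α,β) = √(Z(α,β)/2)`. -/
noncomputable def JS (a b : IFV) : ℝ := Real.sqrt (Z a b / 2)

/-- Atanassov's order: `α ⊂ β` iff `μ_α ≤ μ_β` and `ν_α ≥ ν_β`. -/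
def IFV.sub (a b : IFV) : Prop := a.mu ≤ b.mu ∧ b.nu ≤ a.nu

/-- Strict Atanassov order: `α ⊊ β` iff `α ⊂ β` and `α ≠ β`. -/
def IFV.ssub (a b : IFV) : Prop := a.sub b ∧ a ≠ b

/-- The IFV `⟨1, 0⟩`. -/
def IFV.posOne : IFV := ⟨1, 0, by norm_num, le_rfl, by norm_num⟩

/-- The IFV `⟨0, 1⟩`. -/
def IFV.negOne : IFV := ⟨0, 1, le_rfl, by norm_num, by norm_num⟩

/-! Up to the factor `(p + q) / (2 * log 2)`, `L p q` is the sum of the values of the nonnegative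
function `klFun x = x * log x + 1 - x` at the two ratios of `p` and `q` to their mean `(p + q) / 2`:
those ratios add up to `2`, so the terms `1 - x` cancel. Since `klFun` vanishes on `[0, ∞)` only at
`1`, `L p q = 0` forces nonnegative `p` and `q` to equal their mean. -/

open InformationTheory

theorem L_eq_mul_klFun_add_klFun (p q : ℝ) :
    L p q = (p + q) / (2 * Real.log 2) *
      (klFun (2 * p / (p + q)) + klFun (2 * q / (p + q))) := by
  rcases eq_or_ne (p + q) 0 with hpq | hpq
  · simp [L, hpq]
  · simp only [L, klFun, Real.logb]
    field_simp
    ring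

theorem L_nonneg {p q : ℝ} (hp : 0 ≤ p) (hq : 0 ≤ q) : 0 ≤ L p q := by
  have hp_klFun : 0 ≤ klFun (2 * p / (p + q)) := klFun_nonneg (by positivity)
  have hq_klFun : 0 ≤ klFun (2 * q / (p + q)) := klFun_nonneg (by positivity)
  rw [L_eq_mul_klFun_add_klFun]
  positivity

theorem L_self (p : ℝ) : L p p = 0 := by
  rcases eq_or_ne p 0 with rfl | hp
  · simp [L]
  · simp [L, ← two_mul, hp]

theorem L_eq_zero_iff {p q : ℝ} (hp : 0 ≤ p) (hq : 0 ≤ q) : L p q = 0 ↔ p = q := by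
  refine ⟨fun h => ?_, fun h => h ▸ L_self p⟩
  rcases (add_nonneg hp hq).eq_or_lt' with hpq | hpq
  · linarith
  · have hp_ratio : 0 ≤ 2 * p / (p + q) := by positivity
    have hq_ratio : 0 ≤ 2 * q / (p + q) := by positivity
    have hscale : (p + q) / (2 * Real.log 2) ≠ 0 := by positivity
    rw [L_eq_mul_klFun_add_klFun, mul_eq_zero_iff_left hscale,
      add_eq_zero_iff_of_nonneg (klFun_nonneg hp_ratio) (klFun_nonneg hq_ratio),
      klFun_eq_zero_iff hp_ratio, div_eq_one_iff_eq hpq.ne'] at h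
    linarith [h.1]

theorem IFV.mu_le_one (a : IFV) : a.mu ≤ 1 := by
  linarith [a.nu_nonneg, a.sum_le]

theorem Z_nonneg (a b : IFV) : 0 ≤ Z a b :=
  add_nonneg (L_nonneg (sub_nonneg.2 a.mu_le_one) (sub_nonneg.2 b.mu_le_one))
    (L_nonneg a.nu_nonneg b.nu_nonneg)

theorem Z_eq_zero_iff (a b : IFV) : Z a b = 0 ↔ a = b := by
  have ha : 0 ≤ 1 - a.mu := sub_nonneg.2 a.mu_le_one
  have hb : 0 ≤ 1 - b.mu := sub_nonneg.2 b.mu_le_one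
  rw [Z, add_eq_zero_iff_of_nonneg (L_nonneg ha hb) (L_nonneg a.nu_nonneg b.nu_nonneg),
    L_eq_zero_iff ha hb, L_eq_zero_iff a.nu_nonneg b.nu_nonneg, sub_right_inj, IFV.ext_iff]

theorem JS_eq_zero_iff (a b : IFV) : JS a b = 0 ↔ a = b := by
  rw [JS, Real.sqrt_eq_zero (div_nonneg (Z_nonneg a b) zero_le_two), div_eq_zero_iff,
    or_iff_left two_ne_zero, Z_eq_zero_iff]
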